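/- arXiv:2206.09909 — 4 statements merged into one kernel-verified Lean document; each statement's English description precedes it below -/
import Mathlib

section
/- Let Δ > 0, v₀ = Δ²/4 and v > v₀. Let μ ∈ ℝ^d, ξ ~ N(0, I_d), x = μ + √(v − v₀)·ξ, let Q^d(x) round each coordinate of x to a nearest point of Δℤ, and set r = x − Q^d(x) (so |r_i| ≤ Δ/2 for each i). Conditionally on x, let c_1, …, c_d be independent with c_i ~ Cat(|r_i|, v₀, Δ), and set θ_i = Q^d(x)_i + sign(r_i)·c_i. Then for each coordinate i, E[θ_i] = μ_i and Var[θ_i] = v (the variance-corrected quantizer Q^{vc} in its first branch yields exactly the target mean and variance). -/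
/-!
Write `r = x - Q(x)` for the rounding residual of a coordinate. The residual satisfies
`|r| ≤ Δ/2`, so the three weights of `Cat(|r|, Δ²/4, Δ)` are nonnegative and add up to one; this
law has mean `|r|` and second moment `Δ²/4 + r²`. Given `x`, the output `θ = Q(x) + sign(r) c` thus
has conditional mean `Q(x) + sign(r)|r| = x` and, when `r ≠ 0`, conditional second moment
`(x - m)² + Δ²/4` about any point `m` (`integral_coordLaw`, `integral_sq_coordLaw`).
If `r = 0` the sign vanishes and the correction is lost, but this happens only for `x ∈ Δℤ`, a
countable set, which is null for the nondegenerate Gaussian (`ae_residual_ne_zero`). Averaging over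
`x ~ N(μ, v - Δ²/4)` gives mean `μ` and variance `(v - Δ²/4) + Δ²/4 = v`.

The averaging step is the disintegration formula for the Bochner integral against a composition of
a measure with a kernel, so the conditional law has to be shown to be a Markov kernel
(`vcKernel`) and the integrands integrable (`integrable_sq`, `integrable_id_of_sq`).
-/

open MeasureTheory ProbabilityTheory

noncomputable section

/-- The law `Cat(μ, v, Δ)` on `{Δ, -Δ, 0}`. -/
def catD (Δ μ v : ℝ) : Measure ℝ :=
  (ENNReal.ofReal ((v + μ ^ 2 + μ * Δ) / (2 * Δ ^ 2))) • Measure.dirac Δ +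
  (ENNReal.ofReal ((v + μ ^ 2 - μ * Δ) / (2 * Δ ^ 2))) • Measure.dirac (-Δ) +
  (ENNReal.ofReal (1 - (v + μ ^ 2) / Δ ^ 2)) • Measure.dirac 0

/-- Deterministic rounding to a nearest point of `Δℤ`. -/
def roundD (Δ x : ℝ) : ℝ := Δ * (round (x / Δ) : ℤ)

/-- Law of the first branch of the variance-corrected quantizer with quantization gap `Δ`,
target variance `v > v₀ = Δ²/4` and input mean vector `μ`: sample `x = μ + √(v - v₀)·ξ` with
`ξ ~ N(0, I_d)`, set `r = x - Q^d(x)`, sample (conditionally on `x`, independently over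
coordinates) `c_i ~ Cat(|r_i|, v₀, Δ)`, and output `Q^d(x) + sign(r) ⊙ c`. -/
def vcFirstBranch {d : ℕ} (Δ v : ℝ) (μ : Fin d → ℝ) : Measure (Fin d → ℝ) :=
  (Measure.pi fun i => gaussianReal (μ i) (Real.toNNReal (v - Δ ^ 2 / 4))).bind
    fun x => Measure.pi fun i =>
      (catD Δ |x i - roundD Δ (x i)| (Δ ^ 2 / 4)).map
        fun c => roundD Δ (x i) + Real.sign (x i - roundD Δ (x i)) * c

/-- The conditional law of one output coordinate `θ_i` given the sampled value `x_i = x`. -/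
def coordLaw (Δ x : ℝ) : Measure ℝ :=
  (catD Δ |x - roundD Δ x| (Δ ^ 2 / 4)).map
    fun c => roundD Δ x + Real.sign (x - roundD Δ x) * c

lemma abs_residual_le {Δ : ℝ} (hΔ : 0 < Δ) (x : ℝ) : |x - roundD Δ x| ≤ Δ / 2 := by
  have h := abs_sub_round (x / Δ)
  have hx : x - roundD Δ x = Δ * (x / Δ - round (x / Δ)) := by
    unfold roundD
    field_simp
  rw [hx, abs_mul, abs_of_pos hΔ]
  nlinarith

lemma weight_pos_nonneg {Δ : ℝ} (hΔ : 0 < Δ) {a : ℝ} (ha : 0 ≤ a) :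
    0 ≤ (Δ ^ 2 / 4 + a ^ 2 + a * Δ) / (2 * Δ ^ 2) := by
  positivity

lemma weight_neg_nonneg {Δ a : ℝ} :
    0 ≤ (Δ ^ 2 / 4 + a ^ 2 - a * Δ) / (2 * Δ ^ 2) := by
  -- with `v₀ = Δ²/4` the numerator is the perfect square `(a - Δ/2)²`
  apply div_nonneg
  · nlinarith [sq_nonneg (a - Δ / 2)]
  · positivity

lemma weight_zero_nonneg {Δ : ℝ} (hΔ : 0 < Δ) {a : ℝ} (ha : 0 ≤ a) (h : a ≤ Δ / 2) :
    0 ≤ 1 - (Δ ^ 2 / 4 + a ^ 2) / Δ ^ 2 := by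
  rw [sub_nonneg, div_le_one (by positivity)]
  nlinarith

lemma coordLaw_eq (Δ x : ℝ) : coordLaw Δ x =
    (ENNReal.ofReal ((Δ ^ 2 / 4 + |x - roundD Δ x| ^ 2 + |x - roundD Δ x| * Δ) / (2 * Δ ^ 2))) •
      Measure.dirac (roundD Δ x + Real.sign (x - roundD Δ x) * Δ) +
    (ENNReal.ofReal ((Δ ^ 2 / 4 + |x - roundD Δ x| ^ 2 - |x - roundD Δ x| * Δ) / (2 * Δ ^ 2))) •
      Measure.dirac (roundD Δ x + Real.sign (x - roundD Δ x) * (-Δ)) +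
    (ENNReal.ofReal (1 - (Δ ^ 2 / 4 + |x - roundD Δ x| ^ 2) / Δ ^ 2)) •
      Measure.dirac (roundD Δ x) := by
  have hm : Measurable fun c : ℝ => roundD Δ x + Real.sign (x - roundD Δ x) * c := by fun_prop
  unfold coordLaw catD
  rw [Measure.map_add _ _ hm, Measure.map_add _ _ hm, Measure.map_smul, Measure.map_smul,
    Measure.map_smul, Measure.map_dirac' hm, Measure.map_dirac' hm, Measure.map_dirac' hm, mul_zero,
    add_zero]

lemma isProbabilityMeasure_coordLaw {Δ : ℝ} (hΔ : 0 < Δ) (x : ℝ) :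
    IsProbabilityMeasure (coordLaw Δ x) := by
  have ha := abs_nonneg (x - roundD Δ x)
  have h := abs_residual_le hΔ x
  constructor
  rw [coordLaw_eq]
  simp only [Measure.add_apply, Measure.smul_apply, smul_eq_mul, measure_univ, mul_one]
  rw [← ENNReal.ofReal_add (weight_pos_nonneg hΔ ha) weight_neg_nonneg,
    ← ENNReal.ofReal_add (add_nonneg (weight_pos_nonneg hΔ ha) weight_neg_nonneg)
      (weight_zero_nonneg hΔ ha h), ENNReal.ofReal_eq_one]
  field_simp
  ring

lemma integrable_coordLaw (Δ x : ℝ) (f : ℝ → ℝ) :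
    Integrable f (coordLaw Δ x) := by
  rw [coordLaw_eq]
  have key : ∀ (p y : ℝ), Integrable f (ENNReal.ofReal p • Measure.dirac y) := fun p y =>
    (integrable_dirac (by simp)).smul_measure ENNReal.ofReal_ne_top
  exact ((key _ _).add_measure (key _ _)).add_measure (key _ _)

lemma integral_fun_coordLaw {Δ : ℝ} (hΔ : 0 < Δ) (x : ℝ) (f : ℝ → ℝ) :
    ∫ y, f y ∂(coordLaw Δ x) =
    (Δ ^ 2 / 4 + |x - roundD Δ x| ^ 2 + |x - roundD Δ x| * Δ) / (2 * Δ ^ 2) *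
      f (roundD Δ x + Real.sign (x - roundD Δ x) * Δ) +
    (Δ ^ 2 / 4 + |x - roundD Δ x| ^ 2 - |x - roundD Δ x| * Δ) / (2 * Δ ^ 2) *
      f (roundD Δ x + Real.sign (x - roundD Δ x) * (-Δ)) +
    (1 - (Δ ^ 2 / 4 + |x - roundD Δ x| ^ 2) / Δ ^ 2) * f (roundD Δ x) := by
  have ha := abs_nonneg (x - roundD Δ x)
  have h := abs_residual_le hΔ x
  have key : ∀ (p y : ℝ), Integrable f (ENNReal.ofReal p • Measure.dirac y) := fun p y =>
    (integrable_dirac (by simp)).smul_measure ENNReal.ofReal_ne_top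
  rw [coordLaw_eq, integral_add_measure ((key _ _).add_measure (key _ _)) (key _ _),
    integral_add_measure (key _ _) (key _ _)]
  simp only [integral_smul_measure, integral_dirac, smul_eq_mul]
  rw [ENNReal.toReal_ofReal (weight_pos_nonneg hΔ ha), ENNReal.toReal_ofReal weight_neg_nonneg,
    ENNReal.toReal_ofReal (weight_zero_nonneg hΔ ha h)]

lemma integral_coordLaw {Δ : ℝ} (hΔ : 0 < Δ) (x : ℝ) :
    ∫ y, y ∂(coordLaw Δ x) = x := by
  rw [integral_fun_coordLaw hΔ x fun y => y]
  have hs : Real.sign (x - roundD Δ x) * |x - roundD Δ x| = x - roundD Δ x := by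
    rcases lt_trichotomy (x - roundD Δ x) 0 with h | h | h
    · rw [Real.sign_of_neg h, abs_of_neg h]; ring
    · rw [h]; simp
    · rw [Real.sign_of_pos h, abs_of_pos h]; ring
  generalize |x - roundD Δ x| = a at *
  generalize Real.sign (x - roundD Δ x) = s at *
  generalize roundD Δ x = q at *
  field_simp
  linear_combination (8 * Δ ^ 2) * hs

lemma integral_sq_coordLaw {Δ : ℝ} (hΔ : 0 < Δ) {x : ℝ} (hx : x - roundD Δ x ≠ 0) (m : ℝ) :
    ∫ y, (y - m) ^ 2 ∂(coordLaw Δ x) = (x - m) ^ 2 + Δ ^ 2 / 4 := by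
  rw [integral_fun_coordLaw hΔ x fun y => (y - m) ^ 2]
  rcases lt_or_gt_of_ne hx with h | h
  · rw [Real.sign_of_neg h, abs_of_neg h]
    field_simp
    ring
  · rw [Real.sign_of_pos h, abs_of_pos h]
    field_simp
    ring

lemma measurable_roundD (Δ : ℝ) : Measurable (roundD Δ) := by
  unfold roundD
  simp only [round_eq]
  fun_prop

lemma measurable_real_sign : Measurable Real.sign := by
  unfold Real.sign
  exact Measurable.ite measurableSet_Iio measurable_const
    (Measurable.ite measurableSet_Ioi measurable_const measurable_const)

lemma measurable_coordLaw (Δ : ℝ) : Measurable (coordLaw Δ) := by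
  have hr := measurable_roundD Δ
  have hsg : Measurable fun x => Real.sign (x - roundD Δ x) :=
    measurable_real_sign.comp (measurable_id.sub hr)
  have habs : Measurable fun x => |x - roundD Δ x| := by fun_prop
  refine Measure.measurable_of_measurable_coe _ fun s hs => ?_
  have hd : ∀ g : ℝ → ℝ, Measurable g → Measurable fun x => Measure.dirac (g x) s :=
    fun g hg => (Measure.measurable_coe hs).comp (Measure.measurable_dirac.comp hg)
  simp only [coordLaw_eq, Measure.add_apply, Measure.smul_apply, smul_eq_mul]
  refine Measurable.add (Measurable.add ?_ ?_) ?_ <;>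
    exact Measurable.mul (by fun_prop) (hd _ (by fun_prop))

lemma measurable_pi_coordLaw {d : ℕ} {Δ : ℝ} (hΔ : 0 < Δ) :
    Measurable fun x : Fin d → ℝ => Measure.pi fun i => coordLaw Δ (x i) := by
  have := isProbabilityMeasure_coordLaw hΔ
  refine Measurable.measure_of_isPiSystem_of_isProbabilityMeasure generateFrom_pi.symm
    isPiSystem_pi ?_
  rintro _ ⟨t, ht, rfl⟩
  simp only [Measure.pi_pi]
  refine Finset.measurable_prod _ fun i _ => ?_
  have hti : MeasurableSet (t i) := ht i (Set.mem_univ i)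
  exact (Measure.measurable_coe hti).comp
    ((measurable_coordLaw Δ).comp (measurable_pi_apply i))

/-- The conditional law of the output vector `θ` given the sampled vector `x`, as a kernel. -/
def vcKernel (d : ℕ) {Δ : ℝ} (hΔ : 0 < Δ) : Kernel (Fin d → ℝ) (Fin d → ℝ) where
  toFun x := Measure.pi fun i => coordLaw Δ (x i)
  measurable' := measurable_pi_coordLaw hΔ

instance isMarkovKernel_vcKernel (d : ℕ) {Δ : ℝ} (hΔ : 0 < Δ) :
    IsMarkovKernel (vcKernel d hΔ) := by
  have := isProbabilityMeasure_coordLaw hΔ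
  exact ⟨fun x => inferInstanceAs (IsProbabilityMeasure (Measure.pi fun i => coordLaw Δ (x i)))⟩

lemma integral_vcKernel {d : ℕ} {Δ : ℝ} (hΔ : 0 < Δ) (x : Fin d → ℝ) (i : Fin d) (f : ℝ → ℝ) :
    ∫ θ, f (θ i) ∂(vcKernel d hΔ x) = ∫ y, f y ∂(coordLaw Δ (x i)) := by
  have := isProbabilityMeasure_coordLaw hΔ
  exact integral_comp_eval (μ := fun i => coordLaw Δ (x i))
    (integrable_coordLaw Δ (x i) f).aestronglyMeasurable

lemma integral_bind_kernel {α β : Type*} [MeasurableSpace α] [MeasurableSpace β]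
    {ν : Measure α} {κ : Kernel α β} {f : β → ℝ} (hf : Integrable f (ν.bind κ)) :
    ∫ z, f z ∂(ν.bind κ) = ∫ x, ∫ y, f y ∂(κ x) ∂ν := by
  rw [Measure.comp_eq_comp_const_apply] at hf ⊢
  rw [Kernel.integral_comp hf, Kernel.const_apply]

/-- The sampled coordinate almost surely avoids the lattice `Δℤ`. -/
lemma ae_residual_ne_zero (Δ m : ℝ) {w : NNReal} (hw : w ≠ 0) :
    ∀ᵐ x ∂(gaussianReal m w), x - roundD Δ x ≠ 0 := by
  have := nullSingletonClass_gaussianReal (μ := m) hw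
  have hc : (Set.range fun k : ℤ => Δ * (k : ℝ)).Countable := Set.countable_range _
  filter_upwards [hc.ae_notMem (gaussianReal m w)] with x hx h0
  exact hx ⟨round (x / Δ), (sub_eq_zero.mp h0).symm⟩

lemma integrable_sq_gaussian (m : ℝ) (w : NNReal) :
    Integrable (fun x => (x - m) ^ 2) (gaussianReal m w) :=
  ((memLp_id_gaussianReal 2).sub (memLp_const m)).integrable_sq

lemma integral_sq_gaussian (m : ℝ) (w : NNReal) :
    ∫ x, (x - m) ^ 2 ∂(gaussianReal m w) = w := by
  have h := variance_eq_integral (μ := gaussianReal m w) (X := id) aemeasurable_id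
  simpa [variance_id_gaussianReal, integral_id_gaussianReal] using h.symm

section

variable {d : ℕ} {Δ : ℝ} (hΔ : 0 < Δ) {w : NNReal} (μ : Fin d → ℝ) (i : Fin d)

lemma ae_integral_sq_vcKernel (hw : w ≠ 0) :
    (fun x => ∫ θ, (θ i - μ i) ^ 2 ∂(vcKernel d hΔ x))
      =ᵐ[Measure.pi fun j => gaussianReal (μ j) w]
    fun x => (x i - μ i) ^ 2 + Δ ^ 2 / 4 := by
  have h := (measurePreserving_eval (fun j => gaussianReal (μ j) w) i).quasiMeasurePreserving.ae
    (ae_residual_ne_zero Δ (μ i) hw)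
  filter_upwards [h] with x hx
  rw [integral_vcKernel hΔ x i fun y => (y - μ i) ^ 2]
  exact integral_sq_coordLaw hΔ hx (μ i)

lemma integrable_sq (hw : w ≠ 0) :
    Integrable (fun θ => (θ i - μ i) ^ 2)
      ((Measure.pi fun j => gaussianReal (μ j) w).bind (vcKernel d hΔ)) := by
  have := isProbabilityMeasure_coordLaw hΔ
  have hmeas : Measurable fun θ : Fin d → ℝ => (θ i - μ i) ^ 2 := by fun_prop
  rw [Measure.integrable_comp_iff hmeas.aestronglyMeasurable]
  constructor
  · refine Filter.Eventually.of_forall fun x => ?_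
    exact integrable_comp_eval (μ := fun i => coordLaw Δ (x i)) (f := fun y => (y - μ i) ^ 2)
      (integrable_coordLaw Δ (x i) _)
  · simp only [norm_pow, Real.norm_eq_abs, sq_abs]
    rw [integrable_congr (ae_integral_sq_vcKernel hΔ μ i hw)]
    exact (integrable_comp_eval (μ := fun j => gaussianReal (μ j) w)
      (integrable_sq_gaussian (μ i) w)).add (integrable_const _)

lemma integrable_id_of_sq (hw : w ≠ 0) :
    Integrable (fun θ => θ i)
      ((Measure.pi fun j => gaussianReal (μ j) w).bind (vcKernel d hΔ)) := by
  have hmeas : Measurable fun θ : Fin d → ℝ => θ i - μ i := by fun_prop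
  have h : MemLp (fun θ : Fin d → ℝ => θ i - μ i) 2
      ((Measure.pi fun j => gaussianReal (μ j) w).bind (vcKernel d hΔ)) :=
    (memLp_two_iff_integrable_sq hmeas.aestronglyMeasurable).2 (integrable_sq hΔ μ i hw)
  refine ((h.integrable one_le_two).add (integrable_const (μ i))).congr ?_
  exact Filter.Eventually.of_forall fun θ => sub_add_cancel (θ i) (μ i)

end

/-- First branch of the variance-corrected quantizer: for `v₀ = Δ²/4 < v` it yields in each
coordinate exactly the target mean `E[θ_i] = μ_i` and variance `Var[θ_i] = v`. -/
theorem vc_first_branch_mean_var {d : ℕ} (Δ v v₀ : ℝ) (hΔ : 0 < Δ)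
    (hv₀ : v₀ = Δ ^ 2 / 4) (hv : v₀ < v) (μ : Fin d → ℝ) (i : Fin d) :
    (∫ θ, θ i ∂(vcFirstBranch Δ v μ)) = μ i ∧
    (∫ θ, (θ i - μ i) ^ 2 ∂(vcFirstBranch Δ v μ)) = v := by
  have hpos : 0 < v - Δ ^ 2 / 4 := by linarith
  have hlaw : vcFirstBranch Δ v μ =
      (Measure.pi fun j => gaussianReal (μ j) (Real.toNNReal (v - Δ ^ 2 / 4))).bind
        (vcKernel d hΔ) := rfl
  have hw : Real.toNNReal (v - Δ ^ 2 / 4) ≠ 0 := (Real.toNNReal_pos.2 hpos).ne'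
  have hwv : (Real.toNNReal (v - Δ ^ 2 / 4) : ℝ) = v - Δ ^ 2 / 4 := Real.coe_toNNReal _ hpos.le
  rw [hlaw]
  generalize Real.toNNReal (v - Δ ^ 2 / 4) = w at *
  constructor
  · rw [integral_bind_kernel (integrable_id_of_sq hΔ μ i hw)]
    simp only [integral_vcKernel hΔ _ i fun y => y, integral_coordLaw hΔ]
    rw [integral_comp_eval (μ := fun j => gaussianReal (μ j) w) (f := fun y => y) (by fun_prop)]
    exact integral_id_gaussianReal
  · rw [integral_bind_kernel (integrable_sq hΔ μ i hw),
      integral_congr_ae (ae_integral_sq_vcKernel hΔ μ i hw),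
      integral_add (integrable_comp_eval (μ := fun j => gaussianReal (μ j) w)
        (integrable_sq_gaussian (μ i) w)) (integrable_const _),
      integral_comp_eval (μ := fun j => gaussianReal (μ j) w) (f := fun y => (y - μ i) ^ 2)
        (by fun_prop), integral_sq_gaussian, hwv]
    simp
end
end

section
/- Let Δ > 0, μ ∈ ℝ, and let v_s = E[(Q^s_Δ(μ) − μ)²] = (μ − Δ⌊μ/Δ⌋)·(Δ⌈μ/Δ⌉ − μ) be the variance of stochastic rounding at μ. Suppose v_s < v ≤ Δ²/4. Let c ~ Cat(0, v − v_s, Δ) be sampled independently of the rounding randomness and set θ = Q^s_Δ(μ) + c. Then E[θ] = μ and Var[θ] = v (the variance-corrected quantizer Q^{vc} in its second branch yields exactly the target mean and variance). -/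
/-!
The law of `θ` is a mixture of six Dirac masses, with weights the products of the rounding and the
correction weights, so every integral against it is the finite sum of `integral_round_add_cat`.
Write `t = ⌈μ/Δ⌉ - μ/Δ ∈ [0, 1)`. If `μ/Δ` is not an integer, then `⌊μ/Δ⌋ = ⌈μ/Δ⌉ - 1`, and the
two claims are polynomial identities in `t`, `⌈μ/Δ⌉`, `Δ` and `v`. If `μ/Δ` is an integer, then
`t = 0`, rounding is deterministic and `vs = 0`. The bounds `0 ≤ vs < v ≤ Δ² / 4` make all weights
nonnegative, so that `ENNReal.ofReal` does not truncate them.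
-/

open MeasureTheory

noncomputable section

/-- The law of stochastic rounding `Q^s_Δ(x)`. -/
def stochRound (Δ x : ℝ) : Measure ℝ :=
  (ENNReal.ofReal ((⌈x / Δ⌉ : ℝ) - x / Δ)) • Measure.dirac (Δ * (⌊x / Δ⌋ : ℤ)) +
  (ENNReal.ofReal (1 - ((⌈x / Δ⌉ : ℝ) - x / Δ))) • Measure.dirac (Δ * (⌈x / Δ⌉ : ℤ))

/-- The integral of `f` against the law of a sum of independent variables with two and three atoms;
the weights need not sum to one, and `f` need not be measurable since every mass is an atom. -/
lemma integral_round_add_cat (f : ℝ → ℝ) (a b c d e p q r s u : ℝ)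
    (hp : 0 ≤ p) (hq : 0 ≤ q) (hr : 0 ≤ r) (hs : 0 ≤ s) (hu : 0 ≤ u) :
    ∫ θ, f θ ∂(((ENNReal.ofReal p • Measure.dirac a + ENNReal.ofReal q • Measure.dirac b).prod
      (ENNReal.ofReal r • Measure.dirac c + ENNReal.ofReal s • Measure.dirac d +
        ENNReal.ofReal u • Measure.dirac e)).map (fun x : ℝ × ℝ => x.1 + x.2)) =
      p * (r * f (a + c) + s * f (a + d) + u * f (a + e)) +
      q * (r * f (b + c) + s * f (b + d) + u * f (b + e)) := by
  have hm : Measurable (fun x : ℝ × ℝ => x.1 + x.2) := by fun_prop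
  have hint : ∀ (w x : ℝ), Integrable f (ENNReal.ofReal w • Measure.dirac x) := fun w x =>
    (integrable_dirac (by simp)).smul_measure ENNReal.ofReal_ne_top
  have hval : ∀ (w x : ℝ), 0 ≤ w → ∫ y, f y ∂(ENNReal.ofReal w • Measure.dirac x) = w * f x := by
    intro w x hw
    rw [integral_smul_measure, integral_dirac, ENNReal.toReal_ofReal hw, smul_eq_mul]
  have hmeas : ((ENNReal.ofReal p • Measure.dirac a + ENNReal.ofReal q • Measure.dirac b).prod
      (ENNReal.ofReal r • Measure.dirac c + ENNReal.ofReal s • Measure.dirac d +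
        ENNReal.ofReal u • Measure.dirac e)).map (fun x : ℝ × ℝ => x.1 + x.2) =
      ((ENNReal.ofReal (p * r) • Measure.dirac (a + c) +
        ENNReal.ofReal (p * s) • Measure.dirac (a + d)) +
        ENNReal.ofReal (p * u) • Measure.dirac (a + e)) +
      ((ENNReal.ofReal (q * r) • Measure.dirac (b + c) +
        ENNReal.ofReal (q * s) • Measure.dirac (b + d)) +
        ENNReal.ofReal (q * u) • Measure.dirac (b + e)) := by
    have hprod : ∀ (w z x y : ℝ), 0 ≤ w →
        ((ENNReal.ofReal w • Measure.dirac x).prod (ENNReal.ofReal z • Measure.dirac y)).map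
          (fun x : ℝ × ℝ => x.1 + x.2) = ENNReal.ofReal (w * z) • Measure.dirac (x + y) := by
      intro w z x y hw
      rw [Measure.prod_smul_left, Measure.prod_smul_right, Measure.dirac_prod_dirac, smul_smul,
        Measure.map_smul, Measure.map_dirac' hm, ENNReal.ofReal_mul hw]
    simp only [Measure.add_prod, Measure.prod_add, Measure.map_add _ _ hm, hprod _ _ _ _ hp,
      hprod _ _ _ _ hq]
    abel
  rw [hmeas]
  rw [integral_add_measure (((hint _ _).add_measure (hint _ _)).add_measure (hint _ _))
      (((hint _ _).add_measure (hint _ _)).add_measure (hint _ _)),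
    integral_add_measure ((hint _ _).add_measure (hint _ _)) (hint _ _),
    integral_add_measure (hint _ _) (hint _ _),
    integral_add_measure ((hint _ _).add_measure (hint _ _)) (hint _ _),
    integral_add_measure (hint _ _) (hint _ _)]
  simp only [hval _ _ (mul_nonneg hp hr), hval _ _ (mul_nonneg hp hs), hval _ _ (mul_nonneg hp hu),
    hval _ _ (mul_nonneg hq hr), hval _ _ (mul_nonneg hq hs), hval _ _ (mul_nonneg hq hu)]
  ring

/-- Second branch of the variance-corrected quantizer in one dimension: with
`v_s = E[(Q^s_Δ(μ) - μ)²] = (μ - Δ⌊μ/Δ⌋)(Δ⌈μ/Δ⌉ - μ)` and `v_s < v ≤ Δ²/4`, the output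
`θ = Q^s_Δ(μ) + c`, with `c ~ Cat(0, v - v_s, Δ)` independent of the rounding,
has exactly the target mean `E[θ] = μ` and variance `Var[θ] = E[(θ - μ)²] = v`. -/
theorem vc_second_branch_mean_var (Δ μ v : ℝ) (hΔ : 0 < Δ)
    (vs : ℝ) (hvs : vs = (μ - Δ * (⌊μ / Δ⌋ : ℤ)) * (Δ * (⌈μ / Δ⌉ : ℤ) - μ))
    (hlt : vs < v) (hv : v ≤ Δ ^ 2 / 4) :
    (∫ θ, θ ∂(((stochRound Δ μ).prod (catD Δ 0 (v - vs))).map (fun p => p.1 + p.2))) = μ ∧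
    (∫ θ, (θ - μ) ^ 2
        ∂(((stochRound Δ μ).prod (catD Δ 0 (v - vs))).map (fun p => p.1 + p.2))) = v := by
  have hΔ2 : 0 < Δ ^ 2 := by positivity
  have hμ : μ = Δ * (μ / Δ) := by field_simp
  have hfl := Int.floor_le (μ / Δ)
  have hce := Int.le_ceil (μ / Δ)
  have hce' := Int.ceil_lt_add_one (μ / Δ)
  have hvs0 : 0 ≤ vs := by
    have h1 : 0 ≤ μ - Δ * (⌊μ / Δ⌋ : ℤ) := by nlinarith
    have h2 : 0 ≤ Δ * (⌈μ / Δ⌉ : ℤ) - μ := by nlinarith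
    rw [hvs]
    exact mul_nonneg h1 h2
  have hle : (v - vs) / Δ ^ 2 ≤ 1 := by
    rw [div_le_one hΔ2]
    linarith
  have hw : 0 ≤ (v - vs) / (2 * Δ ^ 2) := div_nonneg (by linarith) (by positivity)
  -- Either `μ / Δ` is an integer or its floor and ceiling differ by one.
  have hcase : ((⌈μ / Δ⌉ : ℝ) = μ / Δ ∧ (⌊μ / Δ⌋ : ℝ) = μ / Δ) ∨
      (⌊μ / Δ⌋ : ℝ) = ⌈μ / Δ⌉ - 1 := by
    rcases hfl.eq_or_lt with h | h
    · left
      refine ⟨le_antisymm ?_ hce, h⟩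
      have : ⌈μ / Δ⌉ ≤ ⌊μ / Δ⌋ := Int.ceil_le.2 h.ge
      calc (⌈μ / Δ⌉ : ℝ) ≤ ⌊μ / Δ⌋ := by exact_mod_cast this
        _ = μ / Δ := h
    · right
      have h1 : ⌊μ / Δ⌋ < ⌈μ / Δ⌉ := by exact_mod_cast h.trans_le hce
      have h2 := Int.ceil_le_floor_add_one (μ / Δ)
      have h3 : ⌊μ / Δ⌋ = ⌈μ / Δ⌉ - 1 := by omega
      exact_mod_cast h3
  have key := fun f : ℝ → ℝ => integral_round_add_cat f (Δ * (⌊μ / Δ⌋ : ℤ)) (Δ * (⌈μ / Δ⌉ : ℤ))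
    Δ (-Δ) 0 ((⌈μ / Δ⌉ : ℝ) - μ / Δ) (1 - ((⌈μ / Δ⌉ : ℝ) - μ / Δ))
    ((v - vs + 0 ^ 2 + 0 * Δ) / (2 * Δ ^ 2)) ((v - vs + 0 ^ 2 - 0 * Δ) / (2 * Δ ^ 2))
    (1 - (v - vs + 0 ^ 2) / Δ ^ 2) (by linarith) (by linarith)
    (by simpa using hw) (by simpa using hw) (by simpa using hle)
  unfold stochRound catD
  rw [key (fun θ => θ), key (fun θ => (θ - μ) ^ 2)]
  -- `y` is the weight of each of `±Δ`; `0` has weight `1 - 2 * y`.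
  obtain ⟨y, hy⟩ : ∃ y, y = (v - vs) / (2 * Δ ^ 2) := ⟨_, rfl⟩
  have hv' : v = vs + 2 * Δ ^ 2 * y := by rw [hy]; field_simp; ring
  have e1 : (v - vs + 0 ^ 2 + 0 * Δ) / (2 * Δ ^ 2) = y := by rw [hy]; congr 1; ring
  have e2 : (v - vs + 0 ^ 2 - 0 * Δ) / (2 * Δ ^ 2) = y := by rw [hy]; congr 1; ring
  have e3 : (v - vs + 0 ^ 2) / Δ ^ 2 = 2 * y := by rw [hy]; field_simp; ring
  rw [e1, e2, e3, hv', hvs]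
  clear key e1 e2 e3 hy hle hw hv' hvs hvs0 hfl hce hce' hlt hv
  generalize (⌈μ / Δ⌉ : ℝ) = k at *
  generalize (⌊μ / Δ⌋ : ℝ) = l at *
  generalize μ / Δ = x at *
  subst hμ
  rcases hcase with ⟨rfl, rfl⟩ | rfl
  · constructor <;> ring
  · constructor <;> ring
end
end

section
/- Let Δ > 0, α > 0, let θ ∈ (Δℤ)^d be a point on the quantization grid, and let g ∈ ℝ^d. Then the mean squared stochastic-rounding error of the gradient-updated point satisfies E‖ Q^s_Δ(θ − αg) − (θ − αg) ‖₂² ≤ Δ·α·‖g‖₁. -/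
/-!
The integrand is a sum of functions of single coordinates, and each marginal of the product law is
the one-dimensional law `stochRound Δ (x i)`, so it suffices to bound the variance of one coordinate.
With `u = x / Δ` and `p = ⌈u⌉ - u`, this variance is `Δ² p (1 - p)` (it vanishes if `u` is an
integer). If `z` is an integer, then either `z ≥ ⌈u⌉`, so that `|z - u| ≥ p`, or `z ≤ ⌊u⌋`, so that
`|z - u| ≥ 1 - p` when `u` is not an integer; in both cases `p (1 - p) ≤ |z - u|`. For a grid point
`θ = Δ z` and `x = θ - α g` one has `Δ |z - u| = α |g|`, which gives the bound.
-/

open MeasureTheory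

noncomputable section

/-- Coordinatewise independent stochastic rounding on `ℝ^d`. -/
def stochRoundPi {d : ℕ} (Δ : ℝ) (x : Fin d → ℝ) : Measure (Fin d → ℝ) :=
  Measure.pi fun i => stochRound Δ (x i)

lemma stochRound_isProbabilityMeasure (Δ x : ℝ) : IsProbabilityMeasure (stochRound Δ x) := by
  have h0 : (0 : ℝ) ≤ (⌈x / Δ⌉ : ℝ) - x / Δ := sub_nonneg.2 (Int.le_ceil _)
  have h1 : (0 : ℝ) ≤ 1 - ((⌈x / Δ⌉ : ℝ) - x / Δ) := by linarith [Int.ceil_lt_add_one (x / Δ)]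
  constructor
  simp only [stochRound, Measure.add_apply, Measure.smul_apply, measure_univ, smul_eq_mul, mul_one]
  rw [← ENNReal.ofReal_add h0 h1]
  simp

lemma integrable_stochRound (Δ x : ℝ) (f : ℝ → ℝ) : Integrable f (stochRound Δ x) := by
  refine Integrable.add_measure ?_ ?_ <;>
    exact (integrable_dirac (by simp)).smul_measure ENNReal.ofReal_ne_top

lemma integral_stochRound (Δ x : ℝ) (f : ℝ → ℝ) :
    ∫ y, f y ∂(stochRound Δ x) =
      ((⌈x / Δ⌉ : ℝ) - x / Δ) * f (Δ * (⌊x / Δ⌋ : ℤ)) +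
        (1 - ((⌈x / Δ⌉ : ℝ) - x / Δ)) * f (Δ * (⌈x / Δ⌉ : ℤ)) := by
  have h0 : (0 : ℝ) ≤ (⌈x / Δ⌉ : ℝ) - x / Δ := sub_nonneg.2 (Int.le_ceil _)
  have h1 : (0 : ℝ) ≤ 1 - ((⌈x / Δ⌉ : ℝ) - x / Δ) := by linarith [Int.ceil_lt_add_one (x / Δ)]
  have hi : ∀ (c a : ℝ), Integrable f (ENNReal.ofReal c • Measure.dirac a) := fun c a =>
    (integrable_dirac (by simp)).smul_measure ENNReal.ofReal_ne_top
  rw [stochRound, integral_add_measure (hi _ _) (hi _ _), integral_smul_measure,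
    integral_smul_measure, integral_dirac, integral_dirac, ENNReal.toReal_ofReal h0,
    ENNReal.toReal_ofReal h1, smul_eq_mul, smul_eq_mul]

/-- The variance of rounding `u` to the integers is at most the distance from `u` to any integer. -/
lemma unit_round_variance_le (u : ℝ) (z : ℤ) :
    ((⌈u⌉ : ℝ) - u) * ((⌊u⌋ : ℝ) - u) ^ 2 + (1 - ((⌈u⌉ : ℝ) - u)) * ((⌈u⌉ : ℝ) - u) ^ 2
      ≤ |(z : ℝ) - u| := by
  have hc : u ≤ ⌈u⌉ := Int.le_ceil u
  have hc' := Int.ceil_lt_add_one u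
  rcases hc.eq_or_lt with h | h
  · rw [← h]
    simp
  · have hf : (⌊u⌋ : ℝ) = ⌈u⌉ - 1 := by
      have : ⌊u⌋ = ⌈u⌉ - 1 := by
        rw [Int.floor_eq_iff]
        push_cast
        constructor <;> linarith
      rw [this]
      push_cast
      rfl
    rw [hf]
    rcases le_or_gt ⌈u⌉ z with hz | hz
    · have hz' : (⌈u⌉ : ℝ) ≤ z := by exact_mod_cast hz
      have := le_abs_self ((z : ℝ) - u)
      nlinarith
    · have hz' : (z : ℝ) ≤ ⌈u⌉ - 1 := by exact_mod_cast Int.le_sub_one_of_lt hz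
      have := neg_le_abs ((z : ℝ) - u)
      nlinarith

/-- The mean squared error of rounding `x` is at most `Δ` times the distance from `x` to any
grid point. -/
lemma stochRound_mse_le (Δ x : ℝ) (hΔ : 0 < Δ) (z : ℤ) :
    ∫ y, (y - x) ^ 2 ∂(stochRound Δ x) ≤ Δ * |Δ * z - x| := by
  rw [integral_stochRound]
  have hx : x = Δ * (x / Δ) := by field_simp
  have h := mul_le_mul_of_nonneg_left (unit_round_variance_le (x / Δ) z) (sq_nonneg Δ)
  have hd : |Δ * z - x| = Δ * |(z : ℝ) - x / Δ| := by
    rw [← abs_of_pos hΔ, ← abs_mul, abs_of_pos hΔ, mul_sub, ← hx]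
  rw [hd]
  generalize x / Δ = u at *
  subst hx
  linarith

/-- If `θ ∈ (Δℤ)^d` is a grid point and `g ∈ ℝ^d`, then the mean squared stochastic-rounding
error of the gradient-updated point satisfies `E‖Q^s_Δ(θ - αg) - (θ - αg)‖₂² ≤ Δ·α·‖g‖₁`. -/
theorem stochRound_grid_update_mse {d : ℕ} (Δ α : ℝ) (hΔ : 0 < Δ) (hα : 0 < α)
    (θ g : Fin d → ℝ) (hθ : ∀ i, ∃ z : ℤ, θ i = Δ * z) :
    (∫ y, ∑ i, (y i - (θ i - α * g i)) ^ 2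
        ∂(stochRoundPi Δ (fun i => θ i - α * g i))) ≤ Δ * α * ∑ i, |g i| := by
  have : ∀ i, IsProbabilityMeasure (stochRound Δ (θ i - α * g i)) :=
    fun i => stochRound_isProbabilityMeasure _ _
  have hint : ∀ i, Integrable (fun y : Fin d → ℝ => (y i - (θ i - α * g i)) ^ 2)
      (stochRoundPi Δ (fun i => θ i - α * g i)) := fun i =>
    integrable_comp_eval (i := i) (μ := fun i => stochRound Δ (θ i - α * g i))
      (integrable_stochRound _ _ fun t => (t - (θ i - α * g i)) ^ 2)
  rw [integral_finsetSum _ fun i _ => hint i, Finset.mul_sum]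
  refine Finset.sum_le_sum fun i _ => ?_
  have hmarg : ∫ y, (y i - (θ i - α * g i)) ^ 2 ∂(stochRoundPi Δ (fun i => θ i - α * g i)) =
      ∫ t, (t - (θ i - α * g i)) ^ 2 ∂(stochRound Δ (θ i - α * g i)) :=
    integral_comp_eval (i := i) (μ := fun i => stochRound Δ (θ i - α * g i))
      (integrable_stochRound _ _ fun t => (t - (θ i - α * g i)) ^ 2).aestronglyMeasurable
  obtain ⟨z, hz⟩ := hθ i
  rw [hmarg]
  refine (stochRound_mse_le Δ _ hΔ z).trans_eq ?_
  rw [← hz, sub_sub_cancel, abs_mul, abs_of_pos hα, mul_assoc]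
end
end

section
/- Let Δ > 0, v₀ = Δ²/4, and α > 0 with 2α > v₀. Let μ ∈ ℝ^d and ξ ~ N(0, I_d). Let θ be the output of the variance-corrected quantizer in its first branch with target variance 2α: x = μ + √(2α − v₀)·ξ, r = x − Q^d(x) where Q^d rounds each coordinate to a nearest point of Δℤ, c_i ~ Cat(|r_i|, v₀, Δ) independently conditionally on x, and θ = Q^d(x) + sign(r) ⊙ c. Let ψ = μ + √(2α)·ξ be the exact Langevin proposal built from the same Gaussian ξ. Then E‖ψ − θ‖₂² ≤ 5·v₀·d. -/
/-!
Conditionally on `ξ`, each coordinate `θ i = Q(x i) + sign(r i) * c i` is an unbiased quantization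
of `x i` with variance at most `v₀ = Δ²/4`: the categorical variable has mean `|r i|` and second
moment `v₀ + (r i)²`. Hence `E[(ψ i - θ i)² | ξ] ≤ (ψ i - x i)² + v₀`
(`lintegral_sq_sub_quantized_le`). Since `ψ i - x i = (√(2α) - √(2α - v₀)) * ξ i`, its second moment
is `(√(2α) - √(2α - v₀))² ≤ v₀` (`sqrt_sub_sqrt_sq_le`). Summing over coordinates gives the stronger
bound `2 * v₀ * d`. All expectations are computed as Lebesgue integrals of nonnegative functions.
-/

open MeasureTheory ProbabilityTheory

noncomputable section

/-- Joint law of `(ψ, θ)` built from the same Gaussian `ξ ~ N(0, I_d)`: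
`ψ = μ + √(2α)·ξ` is the exact Langevin proposal, and `θ` is the output of the first branch
of the variance-corrected quantizer with target variance `2α`: `x = μ + √(2α - v₀)·ξ`,
`r = x - Q^d(x)`, `c_i ~ Cat(|r_i|, v₀, Δ)` independently conditionally on `x`, and
`θ = Q^d(x) + sign(r) ⊙ c`, where `v₀ = Δ²/4`. -/
def vcFirstJoint {d : ℕ} (Δ α : ℝ) (μ : Fin d → ℝ) : Measure ((Fin d → ℝ) × (Fin d → ℝ)) :=
  (Measure.pi fun _ : Fin d => gaussianReal 0 1).bind fun ξ =>
    let x : Fin d → ℝ := fun i => μ i + Real.sqrt (2 * α - Δ ^ 2 / 4) * ξ i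
    (Measure.pi fun i =>
        (catD Δ |x i - roundD Δ (x i)| (Δ ^ 2 / 4)).map
          fun c => roundD Δ (x i) + Real.sign (x i - roundD Δ (x i)) * c).map
      fun θ => (fun i => μ i + Real.sqrt (2 * α) * ξ i, θ)

/-- The rounding residual is at most half a grid step. -/
lemma abs_sub_roundD_le (Δ x : ℝ) (hΔ : 0 < Δ) : |x - roundD Δ x| ≤ Δ / 2 := by
  have e : x - roundD Δ x = Δ * (x / Δ - round (x / Δ)) := by
    unfold roundD; field_simp
  rw [e, abs_mul, abs_of_pos hΔ]
  have := abs_sub_round (x / Δ)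
  nlinarith

/-- The three masses of `Cat(m, Δ²/4, Δ)`, `0 ≤ m ≤ Δ/2`, are nonnegative. -/
lemma catD_weights_nonneg (Δ m : ℝ) (hΔ : 0 < Δ) (h0 : 0 ≤ m) (hm : m ≤ Δ / 2) :
    0 ≤ (Δ ^ 2 / 4 + m ^ 2 + m * Δ) / (2 * Δ ^ 2) ∧
    0 ≤ (Δ ^ 2 / 4 + m ^ 2 - m * Δ) / (2 * Δ ^ 2) ∧
    0 ≤ 1 - (Δ ^ 2 / 4 + m ^ 2) / Δ ^ 2 := by
  refine ⟨by positivity, ?_, ?_⟩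
  · apply div_nonneg _ (by positivity)
    nlinarith [sq_nonneg (Δ / 2 - m)]
  · rw [sub_nonneg, div_le_one (by positivity)]
    nlinarith

/-- Integration against `Cat(m, Δ²/4, Δ)` is a weighted sum of three values. -/
lemma lintegral_catD (Δ m : ℝ) (hΔ : 0 < Δ) (h0 : 0 ≤ m) (hm : m ≤ Δ / 2)
    (f : ℝ → ℝ) (hf : ∀ c, 0 ≤ f c) :
    ∫⁻ c, ENNReal.ofReal (f c) ∂(catD Δ m (Δ ^ 2 / 4)) =
      ENNReal.ofReal ((Δ ^ 2 / 4 + m ^ 2 + m * Δ) / (2 * Δ ^ 2) * f Δ +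
        (Δ ^ 2 / 4 + m ^ 2 - m * Δ) / (2 * Δ ^ 2) * f (-Δ) +
        (1 - (Δ ^ 2 / 4 + m ^ 2) / Δ ^ 2) * f 0) := by
  obtain ⟨h1, h2, h3⟩ := catD_weights_nonneg Δ m hΔ h0 hm
  have i1 := mul_nonneg h1 (hf Δ)
  have i2 := mul_nonneg h2 (hf (-Δ))
  have i3 := mul_nonneg h3 (hf 0)
  rw [ENNReal.ofReal_add (add_nonneg i1 i2) i3, ENNReal.ofReal_add i1 i2,
    ENNReal.ofReal_mul h1, ENNReal.ofReal_mul h2, ENNReal.ofReal_mul h3]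
  simp only [catD, lintegral_add_measure, lintegral_smul_measure, lintegral_dirac, smul_eq_mul]

lemma isProbabilityMeasure_catD (Δ m : ℝ) (hΔ : 0 < Δ) (h0 : 0 ≤ m) (hm : m ≤ Δ / 2) :
    IsProbabilityMeasure (catD Δ m (Δ ^ 2 / 4)) := by
  constructor
  have := lintegral_catD Δ m hΔ h0 hm (fun _ => 1) (fun _ => zero_le_one)
  simp only [ENNReal.ofReal_one, lintegral_one] at this
  rw [this, ENNReal.ofReal_eq_one]
  field_simp
  ring

/-- Bias-variance bound for one quantized coordinate: `Q(x) + sign(r) c` has mean `x` and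
variance at most `v₀ = Δ²/4` (exactly `v₀`, unless `r = 0`, when it is the constant `x`). -/
lemma lintegral_sq_sub_quantized_le (Δ x y : ℝ) (hΔ : 0 < Δ) :
    ∫⁻ c, ENNReal.ofReal
        ((y - (roundD Δ x + Real.sign (x - roundD Δ x) * c)) ^ 2)
        ∂(catD Δ |x - roundD Δ x| (Δ ^ 2 / 4)) ≤
      ENNReal.ofReal ((y - x) ^ 2 + Δ ^ 2 / 4) := by
  rw [lintegral_catD Δ _ hΔ (abs_nonneg _) (abs_sub_roundD_le Δ x hΔ)
    (fun c => (y - (roundD Δ x + Real.sign (x - roundD Δ x) * c)) ^ 2) (fun c => sq_nonneg _)]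
  apply ENNReal.ofReal_le_ofReal
  generalize roundD Δ x = q
  obtain ⟨r, rfl⟩ : ∃ r, x = q + r := ⟨x - q, by ring⟩
  simp only [add_sub_cancel_left]
  rcases lt_trichotomy r 0 with hr | rfl | hr
  · rw [Real.sign_of_neg hr, abs_of_neg hr]
    apply le_of_eq
    field_simp
    ring
  · simp only [Real.sign_zero, abs_zero]
    have : 0 ≤ Δ ^ 2 / 4 := by positivity
    refine le_trans (le_of_eq ?_) (le_add_of_nonneg_right this)
    field_simp
    ring
  · rw [Real.sign_of_pos hr, abs_of_pos hr]
    apply le_of_eq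
    field_simp
    ring

/-- Second moment of a standard Gaussian, in the form needed for the `ψ - x` term. -/
lemma lintegral_gaussian_sq (b v : ℝ) (hv : 0 ≤ v) :
    ∫⁻ t, ENNReal.ofReal ((b * t) ^ 2 + v) ∂(gaussianReal 0 1) =
      ENNReal.ofReal (b ^ 2 + v) := by
  have hsq_int : Integrable (fun t : ℝ => t ^ 2) (gaussianReal 0 1) :=
    (memLp_id_gaussianReal 2).integrable_sq
  have hsq : ∫ t, t ^ 2 ∂(gaussianReal 0 1) = 1 := by
    have h1 := variance_fun_id_gaussianReal (μ := 0) (v := 1)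
    rw [variance_of_integral_eq_zero (by fun_prop) (by simp)] at h1
    simpa using h1
  have hsum_int : Integrable (fun t : ℝ => b ^ 2 * t ^ 2 + v) (gaussianReal 0 1) :=
    (hsq_int.const_mul _).add (integrable_const _)
  simp only [mul_pow]
  rw [← ofReal_integral_eq_lintegral_ofReal hsum_int
    (ae_of_all _ fun t => by positivity),
    integral_add (hsq_int.const_mul _) (integrable_const _), integral_const_mul, hsq]
  simp

/-- If `v ≤ s` then `(√s - √(s - v))² ≤ v`. -/
lemma sqrt_sub_sqrt_sq_le (s v : ℝ) (hv : 0 ≤ v) (h : v ≤ s) :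
    (√s - √(s - v)) ^ 2 ≤ v := by
  have h1 := Real.sq_sqrt (hv.trans h)
  have h2 := Real.sq_sqrt (sub_nonneg.2 h)
  have h3 : √(s - v) ≤ √s := Real.sqrt_le_sqrt (by linarith)
  nlinarith [Real.sqrt_nonneg (s - v)]

/-- If `v₀ = Δ²/4 < 2α`, the first branch of the variance-corrected quantizer stays close to
the exact Langevin proposal built from the same Gaussian: `E‖ψ - θ‖₂² ≤ 5·v₀·d`. -/
theorem vc_first_branch_coupling {d : ℕ} (Δ α v₀ : ℝ) (hΔ : 0 < Δ) (hα : 0 < α)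
    (hv₀ : v₀ = Δ ^ 2 / 4) (h : v₀ < 2 * α) (μ : Fin d → ℝ) :
    (∫ p, ∑ i, (p.1 i - p.2 i) ^ 2 ∂(vcFirstJoint Δ α μ)) ≤ 5 * v₀ * d := by
  subst hv₀
  have hv : 0 ≤ Δ ^ 2 / 4 := by positivity
  have hnn : 0 ≤ 5 * (Δ ^ 2 / 4) * d := by positivity
  rw [integral_eq_lintegral_of_nonneg_ae
    (ae_of_all _ fun p => Finset.sum_nonneg fun i _ => sq_nonneg _)
    (by fun_prop)]
  apply ENNReal.toReal_le_of_le_ofReal hnn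
  unfold vcFirstJoint
  set κ : (Fin d → ℝ) → Measure ((Fin d → ℝ) × (Fin d → ℝ)) := fun ξ =>
    let x : Fin d → ℝ := fun i => μ i + Real.sqrt (2 * α - Δ ^ 2 / 4) * ξ i
    (Measure.pi fun i =>
        (catD Δ |x i - roundD Δ (x i)| (Δ ^ 2 / 4)).map
          fun c => roundD Δ (x i) + Real.sign (x i - roundD Δ (x i)) * c).map
      fun θ => (fun i => μ i + Real.sqrt (2 * α) * ξ i, θ) with hκ
  -- `Measure.bind` along a family that is not a.e.-measurable is the zero measure, for which the
  -- bound is trivial; so measurability of `κ` may be assumed.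
  by_cases hm : AEMeasurable κ (Measure.pi fun _ : Fin d => gaussianReal 0 1)
  swap
  · simp [Measure.bind, Measure.map_of_not_aemeasurable hm]
  rw [Measure.lintegral_bind hm (by fun_prop)]
  set b := √(2 * α) - √(2 * α - Δ ^ 2 / 4) with hb
  have key : ∀ ξ : Fin d → ℝ,
      ∫⁻ p, ENNReal.ofReal (∑ i, (p.1 i - p.2 i) ^ 2) ∂(κ ξ) ≤
        ∑ i, ENNReal.ofReal ((b * ξ i) ^ 2 + Δ ^ 2 / 4) := by
    intro ξ
    simp only [hκ]
    rw [lintegral_map (by fun_prop) (by fun_prop)]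
    simp_rw [ENNReal.ofReal_sum_of_nonneg fun i _ => sq_nonneg _]
    rw [lintegral_finsetSum _ (by fun_prop)]
    apply Finset.sum_le_sum
    intro i _
    set x : Fin d → ℝ := fun i => μ i + √(2 * α - Δ ^ 2 / 4) * ξ i with hx
    have hp : ∀ j, IsProbabilityMeasure
        ((catD Δ |x j - roundD Δ (x j)| (Δ ^ 2 / 4)).map
          fun c => roundD Δ (x j) + Real.sign (x j - roundD Δ (x j)) * c) := by
      intro j
      have := isProbabilityMeasure_catD Δ _ hΔ (abs_nonneg _) (abs_sub_roundD_le Δ (x j) hΔ)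
      exact Measure.isProbabilityMeasure_map (by fun_prop)
    have hmp := measurePreserving_eval (fun j =>
        (catD Δ |x j - roundD Δ (x j)| (Δ ^ 2 / 4)).map
          fun c => roundD Δ (x j) + Real.sign (x j - roundD Δ (x j)) * c) i
    have e := hmp.lintegral_comp
      (f := fun t => ENNReal.ofReal ((μ i + √(2 * α) * ξ i - t) ^ 2)) (by fun_prop)
    simp only [Function.eval] at e
    rw [e, lintegral_map (by fun_prop) (by fun_prop)]
    refine (lintegral_sq_sub_quantized_le Δ (x i) _ hΔ).trans (le_of_eq ?_)
    congr 1
    simp only [hx, hb]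
    ring
  refine (lintegral_mono key).trans ?_
  rw [lintegral_finsetSum _ (by fun_prop)]
  have hcoord : ∀ i : Fin d, ∫⁻ ξ : Fin d → ℝ, ENNReal.ofReal ((b * ξ i) ^ 2 + Δ ^ 2 / 4)
      ∂(Measure.pi fun _ : Fin d => gaussianReal 0 1) = ENNReal.ofReal (b ^ 2 + Δ ^ 2 / 4) := by
    intro i
    have e := (measurePreserving_eval (fun _ : Fin d => gaussianReal 0 1) i).lintegral_comp
      (f := fun t => ENNReal.ofReal ((b * t) ^ 2 + Δ ^ 2 / 4)) (by fun_prop)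
    rw [← lintegral_gaussian_sq b _ hv, ← e]
  simp_rw [hcoord]
  rw [← ENNReal.ofReal_sum_of_nonneg fun i _ => by positivity]
  apply ENNReal.ofReal_le_ofReal
  have hb2 : b ^ 2 ≤ Δ ^ 2 / 4 := sqrt_sub_sqrt_sq_le _ _ hv h.le
  simp only [Finset.sum_const, Finset.card_univ, Fintype.card_fin, nsmul_eq_mul]
  have hd : (0 : ℝ) ≤ d := Nat.cast_nonneg d
  nlinarith [mul_le_mul_of_nonneg_left hb2 hd, mul_nonneg hd hv]
end
end
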